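/- Let G be a 3-edge-connected cubic graph and let C ⊆ G be a peripheral cycle. Then there exists a peripheral 2-base B ⊆ E(G) with E(C) ⊆ B. -/

import Mathlib

open scoped Classical

/-- A multigraph with an orientation: each edge `e` has a source `src e` and a target `tgt e`.
Loops and parallel edges are allowed. -/
structure Multigraph (V E : Type) where
  src : E → V
  tgt : E → V

namespace Multigraph

variable {V E : Type}

/-- `u` and `v` are joined by some edge satisfying the predicate `P`. -/
def adjVia (G : Multigraph V E) (P : E → Prop) (u v : V) : Prop :=
  ∃ e, P e ∧ ((G.src e = u ∧ G.tgt e = v) ∨ (G.src e = v ∧ G.tgt e = u))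

/-- `v` is reachable from `u` using only edges satisfying `P`. -/
def Reaches (G : Multigraph V E) (P : E → Prop) : V → V → Prop :=
  Relation.ReflTransGen (G.adjVia P)

/-- The graph is connected when only edges satisfying `P` are kept (all edges deleted
whose predicate fails, all vertices kept). -/
def ConnectedVia (G : Multigraph V E) (P : E → Prop) : Prop :=
  Nonempty V ∧ ∀ u v : V, G.Reaches P u v

def Connected (G : Multigraph V E) : Prop :=
  G.ConnectedVia fun _ => True

/-- `G` is `k`-edge-connected: it is connected and has no edge cut of size less than `k`;
equivalently, deleting any set of fewer than `k` edges leaves it connected. -/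
def EdgeConnected (G : Multigraph V E) (k : ℕ) : Prop :=
  ∀ S : Set E, S.ncard < k → G.ConnectedVia fun e => e ∉ S

/-- The degree of a vertex (loops counted twice). -/
noncomputable def degree (G : Multigraph V E) (v : V) : ℕ :=
  {e | G.src e = v}.ncard + {e | G.tgt e = v}.ncard

/-- Every vertex has degree exactly 3. -/
def Cubic (G : Multigraph V E) : Prop :=
  ∀ v : V, G.degree v = 3

/-- `φ : E → Γ` is a flow: at every vertex, the sum over outgoing edges equals the
sum over incoming edges. -/
def IsFlow [Fintype E] {Γ : Type} [AddCommGroup Γ] (G : Multigraph V E) (φ : E → Γ) : Prop :=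
  ∀ v : V, (∑ e : E, if G.src e = v then φ e else 0) = ∑ e : E, if G.tgt e = v then φ e else 0

/-- The vertex `v` is an endpoint of some edge of `C`. -/
def touches (G : Multigraph V E) (C : Set E) (v : V) : Prop :=
  ∃ e ∈ C, G.src e = v ∨ G.tgt e = v

/-- An edge set `C` is (the edge set of) a cycle: it is nonempty, every vertex it touches
has degree exactly 2 in it, and it is connected. -/
def IsCycle (G : Multigraph V E) (C : Set E) : Prop :=
  C.Nonempty ∧
  (∀ v : V, G.touches C v →
    ({e ∈ C | G.src e = v}.ncard + {e ∈ C | G.tgt e = v}.ncard = 2)) ∧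
  (∀ u v : V, G.touches C u → G.touches C v → G.Reaches (· ∈ C) u v)

/-- `R` is `k`-closed: every cycle with at least one edge outside `R` has at least
`k+1` edges outside `R`. -/
def Closed (G : Multigraph V E) (k : ℕ) (R : Set E) : Prop :=
  ∀ C : Set E, G.IsCycle C → (C \ R).Nonempty → k + 1 ≤ (C \ R).ncard

/-- The `k`-closure `⟨S⟩ₖ` of `S` : the minimal `k`-closed set containing `S`
(the family of `k`-closed sets is closed under intersections). -/
def kClosure (G : Multigraph V E) (k : ℕ) (S : Set E) : Set E :=
  ⋂₀ {R : Set E | S ⊆ R ∧ G.Closed k R}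

/-- `S` is a `k`-base: its `k`-closure is the whole edge set. -/
def IsBase (G : Multigraph V E) (k : ℕ) (S : Set E) : Prop :=
  G.kClosure k S = Set.univ

/-- An edge set `S` is peripheral if `G − S` is connected. -/
def Peripheral (G : Multigraph V E) (S : Set E) : Prop :=
  G.ConnectedVia fun e => e ∉ S

/-- The spanning subgraph `(V, F)` is a forest, i.e. contains no cycle. -/
def IsForest (G : Multigraph V E) (F : Set E) : Prop :=
  ∀ C : Set E, G.IsCycle C → ¬ C ⊆ F

/-- `vs`, `es` describe a path: distinct vertices `vs 0, …, vs n` and distinct edges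
`es 0, …, es (n-1)` where `es i` joins `vs i` and `vs (i+1)`. -/
def IsPath (G : Multigraph V E) {n : ℕ} (vs : Fin (n + 1) → V) (es : Fin n → E) : Prop :=
  Function.Injective vs ∧ Function.Injective es ∧
  ∀ i : Fin n,
    (G.src (es i) = vs i.castSucc ∧ G.tgt (es i) = vs i.succ) ∨
    (G.src (es i) = vs i.succ ∧ G.tgt (es i) = vs i.castSucc)

/-- The edge `e` has `y` as one endpoint and its other endpoint in `X`,
i.e. `e ∈ E(y, X)`. -/
def joins (G : Multigraph V E) (e : E) (y : V) (X : Set V) : Prop :=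
  (G.src e = y ∧ G.tgt e ∈ X) ∨ (G.tgt e = y ∧ G.src e ∈ X)

/-- `W` is the vertex set of a connected component of `G − X`. -/
def IsComponent (G : Multigraph V E) (X W : Set V) : Prop :=
  W.Nonempty ∧ Disjoint W X ∧
  (∀ u ∈ W, ∀ v : V, v ∉ X → G.adjVia (fun _ => True) u v → v ∈ W) ∧
  (∀ u ∈ W, ∀ v ∈ W, G.Reaches (fun e => G.src e ∉ X ∧ G.tgt e ∉ X) u v)

/-- The subgraph induced on `W`, with only those of its edges satisfying `P` kept,
is connected. -/
def ConnectedOn (G : Multigraph V E) (W : Set V) (P : E → Prop) : Prop :=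
  ∀ u ∈ W, ∀ v ∈ W, G.Reaches (fun e => P e ∧ G.src e ∈ W ∧ G.tgt e ∈ W) u v

/-- The subgraph induced on `W` is `k`-edge-connected. -/
def EdgeConnectedOn (G : Multigraph V E) (W : Set V) (k : ℕ) : Prop :=
  ∀ S : Set E, S.ncard < k → G.ConnectedOn W fun e => e ∉ S

/-- Some cycle lies entirely inside the vertex set `X`. -/
def HasCycleIn (G : Multigraph V E) (X : Set V) : Prop :=
  ∃ C : Set E, G.IsCycle C ∧ ∀ e ∈ C, G.src e ∈ X ∧ G.tgt e ∈ X

/-- The edge cut `E(X, V \ X)`. -/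
def cutEdges (G : Multigraph V E) (X : Set V) : Set E :=
  {e | (G.src e ∈ X ∧ G.tgt e ∉ X) ∨ (G.src e ∉ X ∧ G.tgt e ∈ X)}

/-- A cubic graph is cyclically `k`-edge-connected if every edge cut separating two
cycle-containing parts has at least `k` edges. -/
def CyclicallyEdgeConnected (G : Multigraph V E) (k : ℕ) : Prop :=
  ∀ X : Set V, G.HasCycleIn X → G.HasCycleIn Xᶜ → k ≤ (G.cutEdges X).ncard

/-- `G` is 3-connected: more than 3 vertices, connected, and still connected after
deleting any two vertices. -/
def ThreeConnected [Fintype V] (G : Multigraph V E) : Prop :=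
  3 < Fintype.card V ∧ G.Connected ∧
    ∀ u v : V, G.ConnectedOn {w : V | w ≠ u ∧ w ≠ v} fun _ => True

/-- The graph `G − r` obtained by deleting the vertex `r` and all incident edges. -/
def deleteVertex (G : Multigraph V E) (r : V) :
    Multigraph {v : V // v ≠ r} {e : E // G.src e ≠ r ∧ G.tgt e ≠ r} where
  src e := ⟨G.src e.1, e.2.1⟩
  tgt e := ⟨G.tgt e.1, e.2.2⟩

end Multigraph

/-!
Grow a vertex set `X` and a peripheral edge set `B` inside `X`, starting from the cycle, such that
the 2-closure of `B` connects `X` and the complement of `X` is connected. If `X` and a set `M`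
are joined by two edges and both are connected in a 2-closed set `F`, then so is `X ∪ M`: a path
using one of the two edges closes up with the other to a cycle with at most two edges outside `F`.
So `X` can absorb any vertex outside it with two edges to it. If there is none, cut the complement
into connected sets `M` and `R` such that at least two vertices of `M` have neighbors in `X`, with
`M` minimal. Then `X` absorbs `M` and `B` absorbs all edges inside `M`, and `B` stays peripheral
because each vertex of `M` has a neighbor in `R`. Indeed, by minimality, each vertex of `M` with a
neighbor in `R` separates within `M` the vertices with neighbors in `X`, so a component of the set
of vertices of `M` without neighbors in `R` could be cut off by two edges, contradicting
3-edge-connectivity.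
-/

namespace Multigraph

variable {V E : Type} {G : Multigraph V E}

section Links

variable {e : E} {u v w : V} {A B M X Y Z : Set V}

/-- The edge `e` joins `u` and `v`, in either orientation. -/
def IsLink (G : Multigraph V E) (e : E) (u v : V) : Prop :=
  (G.src e = u ∧ G.tgt e = v) ∨ (G.src e = v ∧ G.tgt e = u)

/-- Adjacency in the underlying undirected graph. -/
abbrev Adj (G : Multigraph V E) : V → V → Prop := G.adjVia fun _ => True

/-- The set `E(A, B)` of edges with one end in `A` and the other in `B`. In particular
`E(A, A)` is the edge set of the subgraph induced on `A`. -/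
def edgesBetween (G : Multigraph V E) (A B : Set V) : Set E :=
  {e | ∃ a ∈ A, ∃ b ∈ B, G.IsLink e a b}

/-- The set of vertices adjacent to a vertex of `A`; it may meet `A` itself. -/
def neighbors (G : Multigraph V E) (A : Set V) : Set V :=
  {v | ∃ a ∈ A, G.Adj v a}

theorem isLink_src_tgt (e : E) : G.IsLink e (G.src e) (G.tgt e) := .inl ⟨rfl, rfl⟩

theorem IsLink.symm (h : G.IsLink e u v) : G.IsLink e v u := Or.symm h

theorem IsLink.right_unique (h : G.IsLink e u v) (h' : G.IsLink e u w) : v = w := by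
  unfold IsLink at h h'
  grind

theorem IsLink.mem_edgesBetween_iff (h : G.IsLink e u v) :
    e ∈ G.edgesBetween A B ↔ (u ∈ A ∧ v ∈ B) ∨ (v ∈ A ∧ u ∈ B) := by
  refine ⟨fun ⟨a, ha, b, hb, hab⟩ => ?_, ?_⟩
  · unfold IsLink at h hab
    grind
  · rintro (⟨hu, hv⟩ | ⟨hv, hu⟩)
    exacts [⟨u, hu, v, hv, h⟩, ⟨v, hv, u, hu, h.symm⟩]

theorem edgesBetween_comm (A B : Set V) : G.edgesBetween A B = G.edgesBetween B A := by
  ext e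
  rw [(isLink_src_tgt e).mem_edgesBetween_iff, (isLink_src_tgt e).mem_edgesBetween_iff]
  tauto

theorem edgesBetween_mono (hAB : A ⊆ B) (hYZ : Y ⊆ Z) : G.edgesBetween A Y ⊆ G.edgesBetween B Z :=
  fun _ ⟨a, ha, y, hy, hay⟩ => ⟨a, hAB ha, y, hYZ hy, hay⟩

theorem cutEdges_eq_edgesBetween_compl (A : Set V) : G.cutEdges A = G.edgesBetween A Aᶜ := by
  ext e
  rw [(isLink_src_tgt e).mem_edgesBetween_iff]
  simp only [cutEdges, Set.mem_ofPred_eq, Set.mem_compl_iff]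
  tauto

theorem mem_edgesBetween_singleton : e ∈ G.edgesBetween {v} Y ↔ ∃ y ∈ Y, G.IsLink e v y := by
  simp [edgesBetween]

theorem IsLink.adjVia {P : E → Prop} (h : G.IsLink e u v) (he : P e) : G.adjVia P u v :=
  ⟨e, he, h⟩

theorem IsLink.adj (h : G.IsLink e u v) : G.Adj u v := h.adjVia trivial

theorem adj_iff_exists_isLink : G.Adj u v ↔ ∃ e, G.IsLink e u v := by
  simp [Adj, Multigraph.adjVia, IsLink]

theorem adjVia.symm {P : E → Prop} (h : G.adjVia P u v) : G.adjVia P v u := by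
  obtain ⟨e, he, huv⟩ := h
  exact ⟨e, he, huv.symm⟩

theorem nonempty_edgesBetween_singleton (h : v ∈ G.neighbors A) :
    (G.edgesBetween {v} A).Nonempty := by
  obtain ⟨a, ha, hva⟩ := h
  obtain ⟨e, he⟩ := adj_iff_exists_isLink.1 hva
  exact ⟨e, v, rfl, a, ha, he⟩

theorem nontrivial_edgesBetween (hMX : Disjoint M X) (hM : (M ∩ G.neighbors X).Nontrivial) :
    (G.edgesBetween X M).Nontrivial := by
  obtain ⟨a, ⟨haM, x, hx, hax⟩, b, ⟨hbM, y, hy, hby⟩, hab⟩ := hM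
  obtain ⟨e, he⟩ := adj_iff_exists_isLink.1 hax
  obtain ⟨f, hf⟩ := adj_iff_exists_isLink.1 hby
  refine ⟨e, ⟨x, hx, a, haM, he.symm⟩, f, ⟨y, hy, b, hbM, hf.symm⟩, ?_⟩
  rintro rfl
  obtain ⟨rfl, -⟩ | ⟨-, hbX⟩ := hf.mem_edgesBetween_iff.1 ⟨a, rfl, x, hx, he⟩
  exacts [hab rfl, Set.disjoint_left.1 hMX hbM hbX]

end Links

section Degree

variable {v : V} {F : Set E} {X Y Z : Set V}

/-- The degree of `v` in the subgraph with edge set `F`, loops counted twice. -/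
noncomputable def degreeIn (G : Multigraph V E) (F : Set E) (v : V) : ℕ :=
  {e ∈ F | G.src e = v}.ncard + {e ∈ F | G.tgt e = v}.ncard

/-- Every vertex has degree at most 3. -/
def Subcubic (G : Multigraph V E) : Prop :=
  ∀ v : V, G.degree v ≤ 3

theorem Cubic.subcubic (hG : G.Cubic) : G.Subcubic := fun v => (hG v).le

theorem degreeIn_le_degree [Finite E] (F : Set E) (v : V) : G.degreeIn F v ≤ G.degree v :=
  add_le_add (Set.ncard_le_ncard fun _ he => he.2) (Set.ncard_le_ncard fun _ he => he.2)

theorem degreeIn_add_degreeIn_compl [Finite E] (F : Set E) (v : V) :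
    G.degreeIn F v + G.degreeIn Fᶜ v = G.degree v := by
  have split (g : E → V) :
      {e ∈ F | g e = v}.ncard + {e ∈ Fᶜ | g e = v}.ncard = {e | g e = v}.ncard := by
    rw [← Set.ncard_inter_add_ncard_sdiff_eq_ncard {e | g e = v} F]
    congr 2 <;> ext e <;> simp [and_comm]
  rw [degree, ← split G.src, ← split G.tgt, degreeIn, degreeIn]
  omega

theorem degreeIn_pos [Finite E] (h : G.touches F v) : 0 < G.degreeIn F v := by
  obtain ⟨e, he, hv | hv⟩ := h
  · exact Nat.add_pos_left ((Set.ncard_pos (Set.toFinite {e ∈ F | G.src e = v})).2 ⟨e, he, hv⟩) _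
  · exact Nat.add_pos_right _ ((Set.ncard_pos (Set.toFinite {e ∈ F | G.tgt e = v})).2 ⟨e, he, hv⟩)

theorem ncard_edgesBetween_singleton_inter_le [Finite E] (v : V) (Y : Set V) (F : Set E) :
    (G.edgesBetween {v} Y ∩ F).ncard ≤ G.degreeIn F v := by
  refine (Set.ncard_le_ncard ?_).trans (Set.ncard_union_le _ _)
  rintro e ⟨he, heF⟩
  obtain ⟨y, -, h | h⟩ := mem_edgesBetween_singleton.1 he
  exacts [.inl ⟨heF, h.1⟩, .inr ⟨heF, h.2⟩]

theorem ncard_edgesBetween_singleton_le [Finite E] (v : V) (Y : Set V) :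
    (G.edgesBetween {v} Y).ncard ≤ G.degree v := by
  simpa using (ncard_edgesBetween_singleton_inter_le v Y Set.univ).trans
    (degreeIn_le_degree (G := G) Set.univ v)

theorem ncard_edgesBetween_singleton_union [Finite E] (v : V) (h : Disjoint Y Z) :
    (G.edgesBetween {v} (Y ∪ Z)).ncard =
      (G.edgesBetween {v} Y).ncard + (G.edgesBetween {v} Z).ncard := by
  rw [← Set.ncard_union_eq]
  · congr 1
    ext e
    simp only [Set.mem_union, mem_edgesBetween_singleton, or_and_right, exists_or]
  · refine Set.disjoint_left.2 fun e hY hZ => ?_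
    obtain ⟨y, hy, hvy⟩ := mem_edgesBetween_singleton.1 hY
    obtain ⟨z, hz, hvz⟩ := mem_edgesBetween_singleton.1 hZ
    exact Set.disjoint_left.1 h hy (hvy.right_unique hvz ▸ hz)

theorem Subcubic.edgesBetween_subsingleton [Finite E] (hG : G.Subcubic) (hYZ : Disjoint Y Z)
    (hY : (G.edgesBetween {v} Y).Nontrivial) : (G.edgesBetween {v} Z).Subsingleton := by
  rw [← Set.ncard_le_one_iff_subsingleton]
  have hdeg := (ncard_edgesBetween_singleton_le v (Y ∪ Z)).trans (hG v)
  rw [ncard_edgesBetween_singleton_union v hYZ] at hdeg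
  have := Set.one_lt_ncard_iff_nontrivial.2 hY
  omega

theorem Subcubic.edgesBetween_eq_empty [Finite E] (hG : G.Subcubic) (hXY : Disjoint X Y)
    (hX : (G.edgesBetween {v} X).Nontrivial) (hY : (G.edgesBetween {v} Y).Nonempty)
    (hZ : Disjoint (X ∪ Y) Z) : G.edgesBetween {v} Z = ∅ := by
  rw [← Set.ncard_eq_zero]
  have hdeg := (ncard_edgesBetween_singleton_le v (X ∪ Y ∪ Z)).trans (hG v)
  rw [ncard_edgesBetween_singleton_union v hZ, ncard_edgesBetween_singleton_union v hXY] at hdeg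
  have := Set.one_lt_ncard_iff_nontrivial.2 hX
  have := (Set.ncard_pos (Set.toFinite _)).2 hY
  omega

end Degree

section Connectivity

variable {P Q : E → Prop} {W X Y Z T A : Set V} {u v : V}

theorem Reaches.symm (h : G.Reaches P u v) : G.Reaches P v u := by
  induction h with
  | refl => exact .refl
  | tail _ h ih => exact .head h.symm ih

theorem Reaches.mono (h : G.Reaches P u v) (hPQ : ∀ e, P e → Q e) : G.Reaches Q u v :=
  Relation.ReflTransGen.mono (fun _ _ ⟨e, he, huv⟩ => ⟨e, hPQ e he, huv⟩) _ _ h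

theorem ConnectedOn.mono (h : G.ConnectedOn W P)
    (hPQ : ∀ e ∈ G.edgesBetween W W, P e → Q e) : G.ConnectedOn W Q :=
  fun u hu v hv => (h u hu v hv).mono fun e he =>
    ⟨hPQ e ((isLink_src_tgt e).mem_edgesBetween_iff.2 (.inl he.2)) he.1, he.2⟩

theorem connectedOn_singleton (v : V) : G.ConnectedOn {v} P := by
  rintro _ rfl _ rfl
  exact .refl

theorem reaches_of_adjVia (h : G.adjVia P u v) (hu : u ∈ W) (hv : v ∈ W) :
    G.Reaches (fun e => P e ∧ G.src e ∈ W ∧ G.tgt e ∈ W) u v := by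
  obtain ⟨e, he, ⟨rfl, rfl⟩ | ⟨rfl, rfl⟩⟩ := h
  exacts [.single ⟨e, ⟨he, hu, hv⟩, .inl ⟨rfl, rfl⟩⟩, .single ⟨e, ⟨he, hv, hu⟩, .inr ⟨rfl, rfl⟩⟩]

theorem ConnectedOn.subset_of_closed (h : G.ConnectedOn W P) (hu : u ∈ W) (huA : u ∈ A)
    (hA : ∀ x ∈ A, ∀ y ∈ W, G.adjVia P x y → y ∈ A) : W ⊆ A := by
  intro v hv
  induction h u hu v hv with
  | refl => exact huA
  | tail _ hstep ih =>
    obtain ⟨e, ⟨he, hsrc, htgt⟩, ⟨rfl, rfl⟩ | ⟨rfl, rfl⟩⟩ := hstep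
    exacts [hA _ (ih hsrc) _ htgt ⟨e, he, .inl ⟨rfl, rfl⟩⟩,
      hA _ (ih htgt) _ hsrc ⟨e, he, .inr ⟨rfl, rfl⟩⟩]

theorem ConnectedOn.exists_adjVia (h : G.ConnectedOn W P) (hu : u ∈ W) (huA : u ∈ A) (hv : v ∈ W)
    (hvA : v ∉ A) : ∃ x ∈ A, ∃ y ∈ W, y ∉ A ∧ G.adjVia P x y := by
  contrapose! hvA
  exact h.subset_of_closed hu huA
    (fun x hx y hy hxy => by_contra fun hyA => hvA x hx y hy hyA hxy) hv

theorem ConnectedOn.union (hY : G.ConnectedOn Y P) (hZ : G.ConnectedOn Z P) (hu : u ∈ Y)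
    (hv : v ∈ Z) (huv : G.adjVia P u v) : G.ConnectedOn (Y ∪ Z) P := by
  have reach_u : ∀ x ∈ Y ∪ Z,
      G.Reaches (fun e => P e ∧ G.src e ∈ Y ∪ Z ∧ G.tgt e ∈ Y ∪ Z) x u := by
    rintro x (hx | hx)
    · exact (hY x hx u hu).mono fun e he => ⟨he.1, .inl he.2.1, .inl he.2.2⟩
    · exact .trans ((hZ x hx v hv).mono fun e he => ⟨he.1, .inr he.2.1, .inr he.2.2⟩)
        (reaches_of_adjVia huv.symm (.inr hv) (.inl hu))
  exact fun x hx y hy => (reach_u x hx).trans (reach_u y hy).symm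

/-- Here `T` is a union of components of `W \ Z`, so that the rest of `W` stays attached to `Z`. -/
theorem ConnectedOn.sdiff (hW : G.ConnectedOn W P) (hZ : G.ConnectedOn Z P) (hZW : Z ⊆ W)
    (hZne : Z.Nonempty) (hTZ : Disjoint T Z)
    (hT : ∀ x ∈ T, ∀ y ∈ W \ Z, G.adjVia P x y → y ∈ T) : G.ConnectedOn (W \ T) P := by
  obtain ⟨z, hz⟩ := hZne
  have hZWT : Z ⊆ W \ T := fun x hx => ⟨hZW hx, Set.disjoint_right.1 hTZ hx⟩
  set A : Set V := {x | G.Reaches (fun e => P e ∧ G.src e ∈ W \ T ∧ G.tgt e ∈ W \ T) z x}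
  have hZA : Z ⊆ A := fun x hx =>
    (hZ z hz x hx).mono fun e he => ⟨he.1, hZWT he.2.1, hZWT he.2.2⟩
  have hWA : W ⊆ W \ T ∩ A ∪ T := by
    refine hW.subset_of_closed (hZW hz) (.inl ⟨hZWT hz, hZA hz⟩) fun x hx y hy hxy => ?_
    by_cases hyT : y ∈ T
    · exact .inr hyT
    refine .inl ⟨⟨hy, hyT⟩, ?_⟩
    by_cases hyZ : y ∈ Z
    · exact hZA hyZ
    · rcases hx with ⟨hx, hxA⟩ | hx
      · exact Relation.ReflTransGen.trans hxA (reaches_of_adjVia hxy hx ⟨hy, hyT⟩)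
      · exact absurd (hT x hx y ⟨hy, hyZ⟩ hxy) hyT
  have hA : ∀ x ∈ W \ T, x ∈ A := fun x hx => ((hWA hx.1).resolve_right hx.2).2
  exact fun x hx y hy => (hA x hx).symm.trans (hA y hy)

theorem ConnectedOn.sdiff_of_subsingleton (hW : G.ConnectedOn W P)
    (hX : ∀ x ∈ X, {y ∈ W | G.adjVia P x y}.Subsingleton) : G.ConnectedOn (W \ X) P := by
  intro u hu v hv
  set A : Set V := {x | x ∈ W \ X ∧
    G.Reaches (fun e => P e ∧ G.src e ∈ W \ X ∧ G.tgt e ∈ W \ X) u x}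
  have huA : u ∈ A := ⟨hu, .refl⟩
  have hWA : W ⊆ A ∪ {x ∈ X | ∃ a ∈ A, G.adjVia P x a} := by
    refine hW.subset_of_closed hu.1 (.inl huA) fun x hx y hy hxy => ?_
    rcases hx with hx | ⟨hx, a, ha, hxa⟩
    · by_cases hyX : y ∈ X
      · exact .inr ⟨hyX, x, hx, hxy.symm⟩
      · exact .inl ⟨⟨hy, hyX⟩, hx.2.trans (reaches_of_adjVia hxy hx.1 ⟨hy, hyX⟩)⟩
    · exact .inl (hX x hx ⟨hy, hxy⟩ ⟨ha.1.1, hxa⟩ ▸ ha)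
  exact ((hWA hv.1).resolve_right fun h => hv.2 h.1).2

theorem ConnectedOn.exists_sdiff_singleton [Finite V] (h : G.ConnectedOn W P)
    (hW : W.Nonempty) : ∃ v ∈ W, G.ConnectedOn (W \ {v}) P := by
  obtain ⟨T, hT⟩ := (Set.toFinite {T | T ⊂ W ∧ G.ConnectedOn T P}).exists_maximal
    ⟨∅, Set.empty_ssubset.2 hW, fun _ hu => hu.elim⟩
  obtain ⟨hTW, hTP⟩ := hT.prop
  obtain ⟨v, hv, hvT, hTv⟩ : ∃ v ∈ W, v ∉ T ∧ G.ConnectedOn (T ∪ {v}) P := by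
    obtain ⟨z, hz, hzT⟩ := Set.exists_of_ssubset hTW
    rcases T.eq_empty_or_nonempty with rfl | ⟨u, hu⟩
    · exact ⟨z, hz, hzT, by simpa using connectedOn_singleton z⟩
    · obtain ⟨x, hx, v, hv, hvT, hxv⟩ := h.exists_adjVia (hTW.subset hu) hu hz hzT
      exact ⟨v, hv, hvT, hTP.union (connectedOn_singleton v) hx rfl hxv⟩
  have hTvW : T ∪ {v} ⊆ W := Set.union_subset hTW.subset (by simpa using hv)
  have heq : T ∪ {v} = W := by
    by_contra hne
    exact hvT (hT.le_of_ge ⟨hTvW.ssubset_of_ne hne, hTv⟩ Set.subset_union_left (.inr rfl))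
  exact ⟨v, hv, by rwa [← heq, Set.union_sdiff_right, Set.sdiff_singleton_eq_self hvT]⟩

theorem connectedVia_iff_connectedOn_univ :
    G.ConnectedVia P ↔ Nonempty V ∧ G.ConnectedOn Set.univ P := by
  simp [ConnectedVia, ConnectedOn]

theorem EdgeConnected.le_ncard_cutEdges {k : ℕ} (h : G.EdgeConnected k) (hA : A.Nonempty)
    (hA' : Aᶜ.Nonempty) : k ≤ (G.cutEdges A).ncard := by
  by_contra! hlt
  obtain ⟨u, hu⟩ := hA
  obtain ⟨v, hv⟩ := hA'
  obtain ⟨x, hx, y, -, hy, e, he, hxy⟩ :=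
    (connectedVia_iff_connectedOn_univ.1 (h _ hlt)).2.exists_adjVia (Set.mem_univ u) hu
      (Set.mem_univ v) hv
  rw [cutEdges_eq_edgesBetween_compl] at he
  exact he ⟨x, hx, y, hy, hxy⟩

end Connectivity

section Components

variable {Y Z S T : Set V} {x y v w : V}

/-- The subgraph induced on `Y` is connected or empty. -/
abbrev IsConnectedSet (G : Multigraph V E) (Y : Set V) : Prop :=
  G.ConnectedOn Y fun _ => True

/-- The vertex set of the component of `x` in the subgraph induced on `Y`, encoded as the union
of the connected sets between `{x}` and `Y`; it is empty if `x ∉ Y`. -/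
def component (G : Multigraph V E) (Y : Set V) (x : V) : Set V :=
  ⋃₀ {T | T ⊆ Y ∧ x ∈ T ∧ G.IsConnectedSet T}

theorem component_subset (Y : Set V) (x : V) : G.component Y x ⊆ Y :=
  Set.sUnion_subset fun _ hT => hT.1

theorem IsConnectedSet.subset_component (hT : G.IsConnectedSet T) (hTY : T ⊆ Y) (hx : x ∈ T) :
    T ⊆ G.component Y x :=
  Set.subset_sUnion_of_mem ⟨hTY, hx, hT⟩

theorem mem_component_self (hx : x ∈ Y) : x ∈ G.component Y x :=
  IsConnectedSet.subset_component (connectedOn_singleton x) (by simpa using hx) rfl rfl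

theorem isConnectedSet_component (Y : Set V) (x : V) : G.IsConnectedSet (G.component Y x) := by
  have reach_x : ∀ u ∈ G.component Y x, G.Reaches
      (fun e => True ∧ G.src e ∈ G.component Y x ∧ G.tgt e ∈ G.component Y x) u x := by
    rintro u ⟨T, ⟨hTY, hxT, hT⟩, hu⟩
    have hsub := hT.subset_component hTY hxT
    exact (hT u hu x hxT).mono fun e he => ⟨he.1, hsub he.2.1, hsub he.2.2⟩
  exact fun u hu v hv => (reach_x u hu).trans (reach_x v hv).symm

theorem mem_component_of_adj (hy : y ∈ G.component Y x) (hv : v ∈ Y) (hyv : G.Adj y v) :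
    v ∈ G.component Y x := by
  have hx : x ∈ G.component Y x := by
    obtain ⟨T, ⟨hTY, hxT, -⟩, -⟩ := hy
    exact mem_component_self (hTY hxT)
  have hconn := (isConnectedSet_component Y x).union (connectedOn_singleton v) hy rfl hyv
  exact IsConnectedSet.subset_component hconn
    (Set.union_subset (component_subset Y x) (by simpa using hv)) (.inl hx) (.inr rfl)

theorem notMem_of_mem_neighbors_component (h : v ∈ G.neighbors (G.component Y x))
    (hv : v ∉ G.component Y x) : v ∉ Y := by
  obtain ⟨y, hy, hvy⟩ := h
  exact fun hvY => hv (mem_component_of_adj hy hvY hvy.symm)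

theorem IsConnectedSet.sdiff_component (hY : G.IsConnectedSet Y) (hZ : G.IsConnectedSet Z)
    (hZY : Z ⊆ Y) (hZne : Z.Nonempty) (x : V) :
    G.IsConnectedSet (Y \ G.component (Y \ Z) x) :=
  hY.sdiff hZ hZY hZne (Set.disjoint_left.2 fun _ ht => (component_subset _ x ht).2)
    fun _ hu _ hv huv => mem_component_of_adj hu hv huv

end Components

section Cycles

variable {P : E → Prop} {e : E} {u v : V}

/-- The column of `e` in the incidence matrix of `G` modulo 2: the sum of the ends of `e`. In
particular loops have incidence vector zero. -/
noncomputable def incidence (G : Multigraph V E) (e : E) : V →₀ ZMod 2 :=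
  .single (G.src e) 1 + .single (G.tgt e) 1

theorem IsLink.incidence_eq (h : G.IsLink e u v) :
    G.incidence e = .single u 1 + .single v 1 := by
  obtain ⟨rfl, rfl⟩ | ⟨rfl, rfl⟩ := h
  exacts [rfl, add_comm _ _]

theorem natCast_degreeIn_support (l : E →₀ ZMod 2) (v : V) :
    (G.degreeIn l.support v : ZMod 2) = Finsupp.linearCombination (ZMod 2) G.incidence l v := by
  have card_ends (g : E → V) : ({e ∈ (l.support : Set E) | g e = v}.ncard : ZMod 2) =
      ∑ e ∈ l.support, if g e = v then 1 else 0 := by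
    rw [← Finset.natCast_card_filter, ← Set.ncard_coe_finset]
    simp
  have eq_one {e : E} (he : e ∈ l.support) : l e = 1 :=
    Fin.eq_one_of_ne_zero _ (Finsupp.mem_support_iff.1 he)
  rw [degreeIn, Nat.cast_add, card_ends, card_ends, ← Finset.sum_add_distrib,
    Finsupp.linearCombination_apply, Finsupp.sum, Finsupp.finsetSum_apply]
  refine Finset.sum_congr rfl fun e he => ?_
  simp [eq_one he, incidence, Finsupp.single_apply]

theorem Reaches.single_add_single_mem_span (h : G.Reaches P u v) :
    (.single u 1 + .single v 1 : V →₀ ZMod 2) ∈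
      Submodule.span (ZMod 2) (G.incidence '' {e | P e}) := by
  induction h with
  | refl => rw [ZModModule.add_self]; exact Submodule.zero_mem _
  | @tail b c _ hbc ih =>
    obtain ⟨e, he, hlink⟩ := hbc
    have hsum := Submodule.add_mem _ ih (Submodule.subset_span (Set.mem_image_of_mem _ he))
    rwa [IsLink.incidence_eq hlink, add_assoc, ← add_assoc (Finsupp.single b 1),
      ZModModule.add_self, zero_add] at hsum

/-- The cycle is the component of `e` in `F`: in a subcubic graph, an even positive degree
is 2. -/
theorem Subcubic.exists_isCycle_of_even [Finite E] (hG : G.Subcubic) {F : Set E}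
    (hF : ∀ v, Even (G.degreeIn F v)) (he : e ∈ F) : ∃ C ⊆ F, G.IsCycle C ∧ e ∈ C := by
  set K : Set V := {v | G.Reaches (· ∈ F) (G.src e) v}
  set C : Set E := {x ∈ F | G.src x ∈ K}
  have src_mem_iff {x : E} (hx : x ∈ F) : G.src x ∈ K ↔ G.tgt x ∈ K :=
    ⟨fun h => .tail h ⟨x, hx, .inl ⟨rfl, rfl⟩⟩, fun h => .tail h ⟨x, hx, .inr ⟨rfl, rfl⟩⟩⟩
  have mem_of_touches {v : V} (hv : G.touches C v) : v ∈ K := by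
    obtain ⟨x, hx, rfl | rfl⟩ := hv
    exacts [hx.2, (src_mem_iff hx.1).1 hx.2]
  have degreeIn_eq {v : V} (hv : v ∈ K) : G.degreeIn C v = G.degreeIn F v := by
    unfold degreeIn
    congr 2 <;> ext x <;> grind
  have reaches_of_mem {v : V} (hv : v ∈ K) : G.Reaches (· ∈ C) (G.src e) v := by
    change G.Reaches _ _ _ at hv
    induction hv with
    | refl => exact .refl
    | tail hb hbc ih =>
      obtain ⟨x, hx, hlink⟩ := hbc
      refine ih.tail ⟨x, ⟨hx, ?_⟩, hlink⟩
      obtain ⟨rfl, -⟩ | ⟨-, rfl⟩ := hlink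
      exacts [hb, (src_mem_iff hx).2 hb]
  refine ⟨C, fun x hx => hx.1, ⟨⟨e, he, .refl⟩, fun v hv => ?_, fun u v hu hv => ?_⟩, he, .refl⟩
  · have hle := (degreeIn_le_degree C v).trans (hG v)
    have hpos := degreeIn_pos hv
    obtain ⟨k, hk⟩ := hF v
    rw [← degreeIn_eq (mem_of_touches hv)] at hk
    change G.degreeIn C v = 2
    omega
  · exact (reaches_of_mem (mem_of_touches hu)).symm.trans (reaches_of_mem (mem_of_touches hv))

theorem Subcubic.exists_isCycle_of_reaches [Finite E] (hG : G.Subcubic) (he : G.IsLink e u v)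
    (h : G.Reaches (fun x => x ≠ e ∧ P x) u v) :
    ∃ C, G.IsCycle C ∧ e ∈ C ∧ ∀ x ∈ C, x ≠ e → P x := by
  obtain ⟨l, hl, hluv⟩ :=
    (Finsupp.mem_span_image_iff_linearCombination _).1 h.single_add_single_mem_span
  have mem_of_ne_zero {x : E} (hx : l x ≠ 0) : x ≠ e ∧ P x :=
    (Finsupp.mem_supported _ _).1 hl (Finsupp.mem_support_iff.2 hx)
  have hle : l e = 0 := by_contra fun hne => (mem_of_ne_zero hne).1 rfl
  have heven (w : V) : Even (G.degreeIn (l + .single e 1 : E →₀ ZMod 2).support w) := by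
    rw [← ZMod.natCast_eq_zero_iff_even, natCast_degreeIn_support, map_add, hluv,
      Finsupp.linearCombination_single, one_smul, he.incidence_eq, ZModModule.add_self,
      Finsupp.zero_apply]
  obtain ⟨C, hCl, hC, heC⟩ := hG.exists_isCycle_of_even heven (e := e) (by simp [hle])
  refine ⟨C, hC, heC, fun x hx hxe => (mem_of_ne_zero ?_).2⟩
  simpa [Ne.symm hxe] using hCl hx

end Cycles

section Closure

variable {k : ℕ} {R S T : Set E} {X Y : Set V} {e : E} {u v : V}

theorem Closed.mem_of_reaches [Finite E] (hR : G.Closed k R) (hG : G.Subcubic) (hS : S.ncard < k)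
    (he : G.IsLink e u v) (h : G.Reaches (fun x => x ≠ e ∧ x ∈ R ∪ S) u v) : e ∈ R := by
  by_contra heR
  obtain ⟨C, hC, heC, hCRS⟩ := hG.exists_isCycle_of_reaches he h
  have hsub : C \ R ⊆ insert e S := fun x hx =>
    or_iff_not_imp_left.2 fun hxe => (hCRS x hx.1 hxe).resolve_left hx.2
  have hlarge := hR C hC ⟨e, heC, heR⟩
  have hsmall := (Set.ncard_le_ncard hsub).trans (Set.ncard_insert_le e S)
  omega

theorem Closed.connectedOn_union [Finite E] (hR : G.Closed k R) (hG : G.Subcubic) (hk : 2 ≤ k)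
    (hX : G.ConnectedOn X (· ∈ R)) (hY : G.ConnectedOn Y (· ∈ R))
    (hXY : (G.edgesBetween X Y).Nontrivial) : G.ConnectedOn (X ∪ Y) (· ∈ R) := by
  obtain ⟨e, ⟨x, hx, y, hy, he⟩, f, ⟨x', hx', y', hy', hf⟩, hef⟩ := hXY
  suffices heR : e ∈ R from hX.union hY hx hy (he.adjVia heR)
  by_contra heR
  have weaken (z : E) (hz : z ∈ R) : z ≠ e ∧ z ∈ R ∪ {f} :=
    ⟨fun h => heR (h ▸ hz), .inl hz⟩
  have hconn := (hX.mono fun z _ => weaken z).union (hY.mono fun z _ => weaken z) hx' hy'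
    (hf.adjVia ⟨hef.symm, .inr rfl⟩)
  refine heR (hR.mem_of_reaches hG (S := {f}) (by rw [Set.ncard_singleton]; omega) he ?_)
  exact (hconn x (.inl hx) y (.inr hy)).mono fun z hz => hz.1

theorem subset_kClosure : S ⊆ G.kClosure k S :=
  Set.subset_sInter fun _ hR => hR.1

theorem kClosure_mono (h : S ⊆ T) : G.kClosure k S ⊆ G.kClosure k T :=
  Set.sInter_subset_sInter fun _ hR => ⟨h.trans hR.1, hR.2⟩

theorem closed_kClosure [Finite E] : G.Closed k (G.kClosure k S) := by
  rintro C hC ⟨e, heC, he⟩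
  obtain ⟨R, ⟨hSR, hR⟩, heR⟩ : ∃ R, (S ⊆ R ∧ G.Closed k R) ∧ e ∉ R := by
    simpa [kClosure, and_assoc] using he
  exact (hR C hC ⟨e, heC, heR⟩).trans <|
    Set.ncard_le_ncard (Set.sdiff_subset_sdiff_right (Set.sInter_subset_of_mem ⟨hSR, hR⟩))

end Closure

section Branches

variable {X Y D M R S : Set V} {v w w₁ w₂ x : V}

/-- A branch of `Y` with respect to a set `D` of terminals: a connected part of `Y` containing at
least two terminals, whose removal leaves the rest of `Y` nonempty and connected. -/
structure IsBranch (G : Multigraph V E) (Y D M : Set V) : Prop where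
  subset : M ⊆ Y
  isConnectedSet : G.IsConnectedSet M
  isConnectedSet_sdiff : G.IsConnectedSet (Y \ M)
  nonempty_sdiff : (Y \ M).Nonempty
  nontrivial_inter : (M ∩ D).Nontrivial

theorem IsConnectedSet.exists_isBranch [Finite V] (hY : G.IsConnectedSet Y)
    (hD : 2 < (Y ∩ D).ncard) : ∃ M, G.IsBranch Y D M := by
  have hYne : Y.Nonempty :=
    (Set.nonempty_of_ncard_ne_zero (s := Y ∩ D) (by omega)).mono Set.inter_subset_left
  obtain ⟨v, hv, hYv⟩ := ConnectedOn.exists_sdiff_singleton hY hYne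
  have hsdiff : Y \ (Y \ {v}) = {v} := by simpa using hv
  refine ⟨Y \ {v}, Set.sdiff_subset, hYv, by rw [hsdiff]; exact connectedOn_singleton v,
    by rw [hsdiff]; exact Set.singleton_nonempty v, ?_⟩
  rw [← Set.one_lt_ncard_iff_nontrivial, ← Set.inter_sdiff_right_comm]
  have := Set.pred_ncard_le_ncard_sdiff_singleton (Y ∩ D) v
  omega

theorem EdgeConnected.le_ncard_compl_inter_neighbors [Finite V] {k : ℕ} (h : G.EdgeConnected k)
    (hX : X.Nonempty) (hX' : Xᶜ.Nonempty)
    (hone : ∀ v ∉ X, (G.edgesBetween {v} X).Subsingleton) :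
    k ≤ (Xᶜ ∩ G.neighbors X).ncard := by
  have : Nonempty V := hX.to_type
  have exists_end : ∀ e ∈ G.cutEdges X, ∃ v ∈ Xᶜ ∩ G.neighbors X, e ∈ G.edgesBetween {v} X := by
    rw [cutEdges_eq_edgesBetween_compl]
    rintro e ⟨x, hx, v, hv, he⟩
    exact ⟨v, ⟨hv, x, hx, he.symm.adj⟩, v, rfl, x, hx, he.symm⟩
  choose! f hf hef using exists_end
  refine (h.le_ncard_cutEdges hX hX').trans (Set.ncard_le_ncard_of_injOn f hf ?_)
  exact fun e he e' he' hee' => hone _ (hf e he).1 (hef e he) (hee' ▸ hef e' he')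

theorem IsBranch.component_inter_subsingleton (hM : Minimal (G.IsBranch Y D) M)
    (hY : G.IsConnectedSet Y) (hwM : w ∈ M) (hw : w ∈ G.neighbors (Y \ M)) (x : V) :
    (G.component (M \ {w}) x ∩ D).Subsingleton := by
  set T := G.component (M \ {w}) x
  have hTM : T ⊆ M \ {w} := component_subset _ x
  obtain ⟨r, hr, hwr⟩ := hw
  by_contra hT
  have hconn : G.IsConnectedSet (Y \ T) := by
    refine hY.sdiff (hM.prop.isConnectedSet_sdiff.union (connectedOn_singleton w) hr rfl hwr.symm)
      ?_ ⟨w, .inr rfl⟩ ?_ fun u hu v hv huv => mem_component_of_adj hu ?_ huv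
    · exact Set.union_subset Set.sdiff_subset (by simpa using hM.prop.subset hwM)
    · exact Set.disjoint_left.2 fun t ht => not_or.2 ⟨fun h => h.2 (hTM ht).1, (hTM ht).2⟩
    · exact ⟨by_contra fun h => hv.2 (.inl ⟨hv.1, h⟩), fun h => hv.2 (.inr h)⟩
  have hbranch : G.IsBranch Y D T :=
    ⟨hTM.trans (Set.sdiff_subset.trans hM.prop.subset), isConnectedSet_component _ x, hconn,
      ⟨w, hM.prop.subset hwM, fun h => (hTM h).2 rfl⟩, Set.not_subsingleton_iff.1 hT⟩
  exact (hTM (hM.le_of_le hbranch (hTM.trans Set.sdiff_subset) hwM)).2 rfl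

/-- Two edges from `w` into the component and one into `R` exhaust the degree of `w`, so the
component would be all of `M` except `w`, and `w` would not be adjacent to `X`. -/
theorem Subcubic.edgesBetween_component_subsingleton [Finite E] (hG : G.Subcubic)
    (hM : G.IsConnectedSet M) (hRM : Disjoint R M) (hRX : Disjoint R X) (hMX : Disjoint M X)
    (hMD : (M ∩ G.neighbors X).Nontrivial) (hwM : w ∈ M) (hwR : w ∈ G.neighbors R)
    (hK : (G.component (M \ {w}) x ∩ G.neighbors X).Subsingleton) :
    (G.edgesBetween {w} (G.component (M \ {w}) x)).Subsingleton := by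
  set K := G.component (M \ {w}) x
  have hKM : K ⊆ M \ {w} := component_subset _ x
  by_contra hwK
  have hempty : G.edgesBetween {w} (K ∪ R)ᶜ = ∅ :=
    hG.edgesBetween_eq_empty (hRM.symm.mono_left (hKM.trans Set.sdiff_subset))
      (Set.not_subsingleton_iff.1 hwK) (nonempty_edgesBetween_singleton hwR)
      disjoint_compl_right
  have neighbor_mem {y : V} (hwy : G.Adj w y) : y ∈ K ∪ R := by
    by_contra hy
    exact (nonempty_edgesBetween_singleton ⟨y, hy, hwy⟩).ne_empty hempty
  have hMK : M ⊆ K ∪ {w} := by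
    refine hM.subset_of_closed hwM (.inr rfl) fun y hy z hz hyz => ?_
    by_cases hzw : z = w
    · exact .inr hzw
    rcases hy with hy | rfl
    · exact .inl (mem_component_of_adj hy ⟨hz, hzw⟩ hyz)
    · exact .inl ((neighbor_mem hyz).resolve_right fun h => Set.disjoint_left.1 hRM h hz)
  have hwX : w ∉ G.neighbors X := fun ⟨y, hy, hwy⟩ => (neighbor_mem hwy).elim
    (fun h => Set.disjoint_left.1 hMX (hKM h).1 hy) fun h => Set.disjoint_left.1 hRX h hy
  refine hMD.not_subsingleton (hK.anti fun y hy => ⟨(hMK hy.1).resolve_right ?_, hy.2⟩)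
  rintro rfl
  exact hwX hy.2

theorem IsConnectedSet.sdiff_component_subset_component (hM : G.IsConnectedSet M)
    (hS : G.IsConnectedSet S) (hSM : S ⊆ M \ {w₁, w₂}) (hx : x ∈ S) (hw : w₁ ≠ w₂) (hw₁M : w₁ ∈ M)
    (hw₂M : w₂ ∈ M) (hw₁ : w₁ ∈ G.neighbors S) (hw₂ : w₂ ∈ G.neighbors S) :
    M \ G.component (M \ {w₂}) x ⊆ G.component (M \ {w₁}) x := by
  obtain ⟨s₁, hs₁, hws₁⟩ := hw₁
  obtain ⟨s₂, hs₂, hws₂⟩ := hw₂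
  have hSK : S ⊆ G.component (M \ {w₂}) x :=
    hS.subset_component (hSM.trans (Set.sdiff_subset_sdiff_right (by simp))) hx
  have hw₁K : w₁ ∈ G.component (M \ {w₂}) x :=
    mem_component_of_adj (hSK hs₁) ⟨hw₁M, hw⟩ hws₁.symm
  have hw₂K : w₂ ∉ G.component (M \ {w₂}) x := fun h => (component_subset _ _ h).2 rfl
  have hconn : G.IsConnectedSet (S ∪ M \ G.component (M \ {w₂}) x) :=
    hS.union (hM.sdiff_component (connectedOn_singleton w₂) (by simpa using hw₂M)
      (Set.singleton_nonempty w₂) x) hs₂ ⟨hw₂M, hw₂K⟩ hws₂.symm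
  refine Set.subset_union_right.trans (IsConnectedSet.subset_component hconn ?_ (.inl hx))
  refine Set.union_subset (hSM.trans (Set.sdiff_subset_sdiff_right (by simp))) fun y hy =>
    ⟨hy.1, ?_⟩
  rintro rfl
  exact hy.2 hw₁K

/-- For `v ∈ S ⊆ M` and `x ∈ M`, the edges by which a path from `v` through `x` to `X` can leave
`S`: those from `x` to `X` if `x ∈ S`, and those joining `S` to a vertex of `M \ S` separating `v`
from `x` in `M`. -/
def exitEdges (G : Multigraph V E) (X M S : Set V) (v x : V) : Set E :=
  {e ∈ G.edgesBetween {x} X | x ∈ S} ∪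
    {e | ∃ w ∈ M \ S, e ∈ G.edgesBetween {w} S ∧ x ∉ G.component (M \ {w}) v}

theorem exitEdges_subsingleton (hM : G.IsConnectedSet M) (hS : G.IsConnectedSet S) (hSM : S ⊆ M)
    (hv : v ∈ S) (hx : x ∈ M) (hxX : (G.edgesBetween {x} X).Subsingleton)
    (hMS : ∀ w ∈ M \ S, (G.edgesBetween {w} S).Subsingleton) :
    (G.exitEdges X M S v x).Subsingleton := by
  have subset_sdiff {A : Set V} (hA : A ⊆ M \ S) : S ⊆ M \ A :=
    fun s hs => ⟨hSM hs, fun h => (hA h).2 hs⟩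
  have mem_component {w : V} (hw : w ∈ M \ S) (hxS : x ∈ S) : x ∈ G.component (M \ {w}) v :=
    hS.subset_component (subset_sdiff (by simpa using hw)) hv hxS
  have mem_neighbors {e : E} {w : V} (he : e ∈ G.edgesBetween {w} S) : w ∈ G.neighbors S := by
    obtain ⟨s, hs, hws⟩ := mem_edgesBetween_singleton.1 he
    exact ⟨s, hs, hws.adj⟩
  rintro e (⟨he, hxS⟩ | ⟨w, hw, he, hxw⟩) f (⟨hf, hxS'⟩ | ⟨w', hw', hf, hxw'⟩)
  · exact hxX he hf
  · exact absurd (mem_component hw' hxS) hxw'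
  · exact absurd (mem_component hw hxS') hxw
  · rcases eq_or_ne w w' with rfl | hne
    · exact hMS w hw he hf
    · exact absurd (hM.sdiff_component_subset_component hS
        (subset_sdiff (Set.insert_subset hw (by simpa using hw'))) hv hne hw.1 hw'.1
        (mem_neighbors he) (mem_neighbors hf) ⟨hx, hxw'⟩) hxw

theorem cutEdges_subset_exitEdges {a b : V} (hSX : S ∩ G.neighbors X ⊆ {a})
    (hSR : Disjoint S (G.neighbors (Xᶜ \ M)))
    (hab : ∀ w ∈ M \ S, w ∈ G.neighbors S →
      a ∉ G.component (M \ {w}) v ∨ b ∉ G.component (M \ {w}) v) :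
    G.cutEdges S ⊆ G.exitEdges X M S v a ∪ G.exitEdges X M S v b := by
  rw [cutEdges_eq_edgesBetween_compl]
  rintro e ⟨s, hs, w, hwS, he⟩
  by_cases hwX : w ∈ X
  · obtain rfl : s = a := hSX ⟨hs, w, hwX, he.adj⟩
    exact .inl (.inl ⟨⟨s, rfl, w, hwX, he⟩, hs⟩)
  have hwM : w ∈ M :=
    by_contra fun hwM => Set.disjoint_left.1 hSR hs ⟨w, ⟨hwX, hwM⟩, he.adj⟩
  have hexit {x : V} (hx : x ∉ G.component (M \ {w}) v) : e ∈ G.exitEdges X M S v x :=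
    .inr ⟨w, ⟨hwM, hwS⟩, ⟨w, rfl, s, hs, he.symm⟩, hx⟩
  exact (hab w ⟨hwM, hwS⟩ ⟨s, hs, he.symm.adj⟩).imp hexit hexit

theorem IsBranch.exists_terminal_pair (hM : Minimal (G.IsBranch Y D) M) (hY : G.IsConnectedSet Y)
    (hSM : S ⊆ M) (hS : G.IsConnectedSet S) (hv : v ∈ S)
    (hSR : Disjoint S (G.neighbors (Y \ M))) :
    ∃ a ∈ M ∩ D, ∃ b ∈ M ∩ D, a ≠ b ∧ S ∩ D ⊆ {a} := by
  obtain ⟨w, hwM, hwR⟩ : ∃ w ∈ M, w ∈ G.neighbors (Y \ M) := by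
    obtain ⟨r, hr⟩ := hM.prop.nonempty_sdiff
    obtain ⟨w, hwM, z, hzY, hzM, hwz⟩ :=
      hY.exists_adjVia (hM.prop.subset (hSM hv)) (hSM hv) hr.1 hr.2
    exact ⟨w, hwM, z, ⟨hzY, hzM⟩, hwz⟩
  have hSK : S ⊆ G.component (M \ {w}) v := hS.subset_component
    (fun s hs => ⟨hSM hs, fun hsw => Set.disjoint_left.1 hSR hs (hsw ▸ hwR)⟩) hv
  have hSD : (S ∩ D).Subsingleton := (component_inter_subsingleton hM hY hwM hwR v).anti
    (Set.inter_subset_inter_left D hSK)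
  obtain h | ⟨a, h⟩ := hSD.eq_empty_or_singleton
  · obtain ⟨a, ha, b, hb, hab⟩ := hM.prop.nontrivial_inter
    exact ⟨a, ha, b, hb, hab, by simp [h]⟩
  · have ha : a ∈ S ∩ D := h ▸ rfl
    obtain ⟨b, hb, hba⟩ := hM.prop.nontrivial_inter.exists_ne a
    exact ⟨a, ⟨hSM ha.1, ha.2⟩, b, hb, hba.symm, h.subset⟩

/-- Otherwise a component `S` of the part of `M` not adjacent to the rest `R` of `Xᶜ` would be cut
off by two edges: the terminals being separated within `M` by each vertex adjacent to `R`, every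
edge leaving `S` is an exit edge of `a` or of `b`. -/
theorem IsBranch.subset_neighbors [Finite E] (h3 : G.EdgeConnected 3) (hG : G.Subcubic)
    (hX : G.IsConnectedSet Xᶜ) (hone : ∀ v ∉ X, (G.edgesBetween {v} X).Subsingleton)
    (hM : Minimal (G.IsBranch Xᶜ (G.neighbors X)) M) : M ⊆ G.neighbors (Xᶜ \ M) := by
  intro v hvM
  by_contra hvR
  have hMX : Disjoint M X := Set.subset_compl_iff_disjoint_right.1 hM.prop.subset
  have hRX : Disjoint (Xᶜ \ M) X := disjoint_compl_left.mono_left Set.sdiff_subset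
  set N : Set V := {u ∈ M | u ∉ G.neighbors (Xᶜ \ M)}
  set S := G.component N v
  have hSN : S ⊆ N := component_subset N v
  have hSM : S ⊆ M := fun s hs => (hSN hs).1
  have hS : G.IsConnectedSet S := isConnectedSet_component N v
  have hvS : v ∈ S := mem_component_self ⟨hvM, hvR⟩
  have mem_neighbors {w : V} (hw : w ∈ M \ S) (hwS : w ∈ G.neighbors S) :
      w ∈ G.neighbors (Xᶜ \ M) :=
    by_contra fun hwR => notMem_of_mem_neighbors_component hwS hw.2 ⟨hw.1, hwR⟩
  have hSR : Disjoint S (G.neighbors (Xᶜ \ M)) := Set.disjoint_left.2 fun s hs => (hSN hs).2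
  obtain ⟨a, ha, b, hb, hab, hSa⟩ := exists_terminal_pair hM hX hSM hS hvS hSR
  have hcut : G.cutEdges S ⊆ G.exitEdges X M S v a ∪ G.exitEdges X M S v b := by
    refine cutEdges_subset_exitEdges hSa hSR fun w hw hwS => ?_
    have hsub := component_inter_subsingleton hM hX hw.1 (mem_neighbors hw hwS) v
    exact not_and_or.1 fun h => hab (hsub ⟨h.1, ha.2⟩ ⟨h.2, hb.2⟩)
  have hMS : ∀ w ∈ M \ S, (G.edgesBetween {w} S).Subsingleton := by
    refine fun w hw e he => ?_
    obtain ⟨s, hs, hws⟩ := mem_edgesBetween_singleton.1 he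
    have hwR := mem_neighbors hw ⟨s, hs, hws.adj⟩
    have hSK : S ⊆ G.component (M \ {w}) v :=
      hS.subset_component (Set.subset_sdiff_singleton hSM hw.2) hvS
    exact (hG.edgesBetween_component_subsingleton hM.prop.isConnectedSet Set.disjoint_sdiff_left hRX
      hMX hM.prop.nontrivial_inter hw.1 hwR (component_inter_subsingleton hM hX hw.1 hwR v)).anti
      (edgesBetween_mono subset_rfl hSK) he
  have hexit {x : V} (hx : x ∈ M) : (G.exitEdges X M S v x).ncard ≤ 1 :=
    Set.ncard_le_one_iff_subsingleton.2 (exitEdges_subsingleton hM.prop.isConnectedSet hS hSM hvS hx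
      (hone x (hM.prop.subset hx)) hMS)
  have hSne : Sᶜ.Nonempty := hM.prop.nonempty_sdiff.mono fun r hr hrS => hr.2 (hSM hrS)
  have hthree := (h3.le_ncard_cutEdges ⟨v, hvS⟩ hSne).trans (Set.ncard_le_ncard hcut)
  have htwo := (Set.ncard_union_le _ _).trans (add_le_add (hexit ha.1) (hexit hb.1))
  omega

end Branches

section PeripheralSets

variable {B C : Set E} {M Y : Set V}

/-- A step along an edge inside `M` is replaced by a detour through `Y`. -/
theorem Peripheral.union_edgesBetween (hB : G.Peripheral B) (hY : G.IsConnectedSet Y)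
    (hBY : B ⊆ G.edgesBetween Yᶜ Yᶜ) (hMY : Disjoint M Y) (hM : M ⊆ G.neighbors Y) :
    G.Peripheral (B ∪ G.edgesBetween M M) := by
  have hsub : B ∪ G.edgesBetween M M ⊆ G.edgesBetween Yᶜ Yᶜ := by
    have hMY' : M ⊆ Yᶜ := Set.subset_compl_iff_disjoint_right.2 hMY
    exact Set.union_subset hBY (edgesBetween_mono hMY' hMY')
  have notMem_of_mem {e : E} {x y : V} (he : G.IsLink e x y) (hy : y ∈ Y) :
      e ∉ B ∪ G.edgesBetween M M := fun h =>
    (he.mem_edgesBetween_iff.1 (hsub h)).elim (fun h => h.2 hy) fun h => h.1 hy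
  have reaches_of_mem {u v : V} (hu : u ∈ M) (hv : v ∈ M) :
      G.Reaches (· ∉ B ∪ G.edgesBetween M M) u v := by
    obtain ⟨y, hy, e, -, he⟩ := hM hu
    obtain ⟨z, hz, f, -, hf⟩ := hM hv
    have hyz : G.Reaches (· ∉ B ∪ G.edgesBetween M M) y z :=
      (hY y hy z hz).mono fun g hg => notMem_of_mem (isLink_src_tgt g) hg.2.2
    exact .head ⟨e, notMem_of_mem he hy, he⟩ (hyz.tail ⟨f, notMem_of_mem hf hz, IsLink.symm hf⟩)
  refine ⟨hB.1, fun u v => Relation.reflTransGen_closed (fun x y hxy => ?_) _ _ (hB.2 u v)⟩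
  obtain ⟨e, he, hlink⟩ := hxy
  by_cases heM : e ∈ G.edgesBetween M M
  · obtain ⟨hx, hy⟩ | ⟨hy, hx⟩ := (IsLink.mem_edgesBetween_iff hlink).1 heM <;>
      exact reaches_of_mem hx hy
  · exact .single ⟨e, not_or.2 ⟨he, heM⟩, hlink⟩

/-- The set of vertices incident with an edge of `C`. -/
def vertexSet (G : Multigraph V E) (C : Set E) : Set V := {v | G.touches C v}

theorem subset_edgesBetween_vertexSet (C : Set E) :
    C ⊆ G.edgesBetween (G.vertexSet C) (G.vertexSet C) :=
  fun e he => ⟨_, ⟨e, he, .inl rfl⟩, _, ⟨e, he, .inr rfl⟩, isLink_src_tgt e⟩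

theorem IsCycle.connectedOn_vertexSet (hC : G.IsCycle C) :
    G.ConnectedOn (G.vertexSet C) (· ∈ C) := fun u hu v hv =>
  (hC.2.2 u v hu hv).mono fun e he => ⟨he, ⟨e, he, .inl rfl⟩, ⟨e, he, .inr rfl⟩⟩

theorem Peripheral.isConnectedSet_compl_vertexSet [Finite E] (hper : G.Peripheral C)
    (hC : G.IsCycle C) (hG : G.Subcubic) : G.IsConnectedSet (G.vertexSet C)ᶜ := by
  rw [Set.compl_eq_univ_sdiff]
  refine ((connectedVia_iff_connectedOn_univ.1 hper).2.sdiff_of_subsingleton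
    fun v hv => ?_).mono fun _ _ _ => trivial
  have hdeg : G.degreeIn C v = 2 := hC.2.1 v hv
  have hle : (G.edgesBetween {v} Set.univ ∩ Cᶜ).ncard ≤ 1 := by
    have := ncard_edgesBetween_singleton_inter_le (G := G) v Set.univ Cᶜ
    have := degreeIn_add_degreeIn_compl (G := G) C v
    have := hG v
    omega
  rintro x ⟨-, e, he, hvx⟩ y ⟨-, f, hf, hvy⟩
  obtain rfl : e = f := Set.ncard_le_one_iff_subsingleton.1 hle
    ⟨⟨v, rfl, x, trivial, hvx⟩, he⟩ ⟨⟨v, rfl, y, trivial, hvy⟩, hf⟩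
  exact IsLink.right_unique hvx hvy

end PeripheralSets

section PartialBases

variable {B C F : Set E} {M X : Set V}

/-- `B` is a peripheral edge set inside `X` whose 2-closure connects `X`, and `X` leaves a connected
complement: the invariant under which `B` is extended, along with `X`, to a 2-base of `G`. -/
structure IsPartialBase (G : Multigraph V E) (B : Set E) (X : Set V) : Prop where
  nonempty : X.Nonempty
  subset_edgesBetween : B ⊆ G.edgesBetween X X
  peripheral : G.Peripheral B
  isConnectedSet_compl : G.IsConnectedSet Xᶜ
  connectedOn : G.ConnectedOn X (· ∈ G.kClosure 2 B)

theorem IsCycle.isPartialBase [Finite E] (hC : G.IsCycle C) (hper : G.Peripheral C)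
    (hG : G.Subcubic) : G.IsPartialBase C (G.vertexSet C) where
  nonempty := let ⟨e, he⟩ := hC.1; ⟨G.src e, e, he, .inl rfl⟩
  subset_edgesBetween := subset_edgesBetween_vertexSet C
  peripheral := hper
  isConnectedSet_compl := hper.isConnectedSet_compl_vertexSet hC hG
  connectedOn := hC.connectedOn_vertexSet.mono fun _ _ he => subset_kClosure he

theorem IsPartialBase.union [Finite E] (hX : G.IsPartialBase B X) (hG : G.Subcubic)
    (hFM : F ⊆ G.edgesBetween M M) (hBF : G.Peripheral (B ∪ F)) (hM : G.ConnectedOn M (· ∈ F))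
    (hXM : G.IsConnectedSet (Xᶜ \ M)) (hlink : (G.edgesBetween X M).Nontrivial) :
    G.IsPartialBase (B ∪ F) (X ∪ M) where
  nonempty := hX.nonempty.inl
  subset_edgesBetween := Set.union_subset
    (hX.subset_edgesBetween.trans
      (edgesBetween_mono Set.subset_union_left Set.subset_union_left))
    (hFM.trans (edgesBetween_mono Set.subset_union_right Set.subset_union_right))
  peripheral := hBF
  isConnectedSet_compl := by rwa [Set.compl_union]
  connectedOn := closed_kClosure.connectedOn_union hG le_rfl
    (hX.connectedOn.mono fun _ _ he => kClosure_mono Set.subset_union_left he)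
    (hM.mono fun _ _ he => subset_kClosure (.inr he)) hlink

theorem IsPartialBase.union_singleton [Finite E] (hX : G.IsPartialBase B X) (hG : G.Subcubic)
    {v : V} (hv : (G.edgesBetween {v} X).Nontrivial) : G.IsPartialBase B (X ∪ {v}) := by
  have hleaf : (G.edgesBetween {v} Xᶜ).Subsingleton :=
    hG.edgesBetween_subsingleton disjoint_compl_right hv
  have hconn : G.IsConnectedSet (Xᶜ \ {v}) := by
    refine hX.isConnectedSet_compl.sdiff_of_subsingleton ?_
    rintro _ rfl x ⟨hx, hvx⟩ y ⟨hy, hvy⟩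
    obtain ⟨e, he⟩ := adj_iff_exists_isLink.1 hvx
    obtain ⟨f, hf⟩ := adj_iff_exists_isLink.1 hvy
    obtain rfl := hleaf ⟨_, rfl, x, hx, he⟩ ⟨_, rfl, y, hy, hf⟩
    exact he.right_unique hf
  simpa using hX.union hG (F := ∅) (Set.empty_subset _) (by simpa using hX.peripheral)
    (connectedOn_singleton v) hconn (by rwa [edgesBetween_comm])

theorem IsPartialBase.union_branch [Finite E] (hX : G.IsPartialBase B X)
    (h3 : G.EdgeConnected 3) (hG : G.Subcubic)
    (hone : ∀ v ∉ X, (G.edgesBetween {v} X).Subsingleton)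
    (hM : Minimal (G.IsBranch Xᶜ (G.neighbors X)) M) :
    G.IsPartialBase (B ∪ G.edgesBetween M M) (X ∪ M) := by
  have hMX : Disjoint M X := Set.subset_compl_iff_disjoint_right.1 hM.prop.subset
  have hXR : X ⊆ (Xᶜ \ M)ᶜ := fun x hx h => h.1 hx
  have hper : G.Peripheral (B ∪ G.edgesBetween M M) :=
    hX.peripheral.union_edgesBetween hM.prop.isConnectedSet_sdiff
      (hX.subset_edgesBetween.trans (edgesBetween_mono hXR hXR)) Set.disjoint_sdiff_right
      (IsBranch.subset_neighbors h3 hG hX.isConnectedSet_compl hone hM)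
  exact hX.union hG subset_rfl hper (hM.prop.isConnectedSet.mono fun _ he _ => he)
    hM.prop.isConnectedSet_sdiff (nontrivial_edgesBetween hMX hM.prop.nontrivial_inter)

theorem IsPartialBase.exists_ssubset [Finite V] [Finite E] (hX : G.IsPartialBase B X)
    (h3 : G.EdgeConnected 3) (hG : G.Subcubic) (hne : X ≠ Set.univ) :
    ∃ B' X', B ⊆ B' ∧ X ⊂ X' ∧ G.IsPartialBase B' X' := by
  by_cases! hone : ∃ v ∉ X, (G.edgesBetween {v} X).Nontrivial
  · obtain ⟨v, hv, hvX⟩ := hone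
    exact ⟨B, X ∪ {v}, subset_rfl, by simpa using Set.ssubset_insert hv,
      hX.union_singleton hG hvX⟩
  have hterminals : 2 < (Xᶜ ∩ G.neighbors X).ncard :=
    h3.le_ncard_compl_inter_neighbors hX.nonempty (Set.nonempty_compl.2 hne) hone
  obtain ⟨M, hM⟩ := (Set.toFinite {M | G.IsBranch Xᶜ (G.neighbors X) M}).exists_minimal
    (hX.isConnectedSet_compl.exists_isBranch hterminals)
  obtain ⟨v, hvM, -⟩ := hM.prop.nontrivial_inter.nonempty
  exact ⟨_, X ∪ M, Set.subset_union_left,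
    Set.ssubset_iff_exists.2 ⟨Set.subset_union_left, v, .inr hvM, hM.prop.subset hvM⟩,
    hX.union_branch h3 hG hone hM⟩

theorem IsPartialBase.isBase [Finite E] (h : G.IsPartialBase B Set.univ) (hG : G.Subcubic) :
    G.IsBase 2 B := by
  refine Set.eq_univ_of_forall fun e => by_contra fun he => he ?_
  refine closed_kClosure.mem_of_reaches hG (S := ∅) (by simp) (isLink_src_tgt e) ?_
  exact (h.connectedOn _ trivial _ trivial).mono fun x hx =>
    ⟨fun hxe => he (hxe ▸ hx.1), .inl hx.1⟩

end PartialBases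

end Multigraph

/-- In a 3-edge-connected cubic graph, every peripheral cycle `C` is contained in some
peripheral 2-base `B`. -/
theorem peripheral_two_base_containing_cycle {V E : Type} [Fintype V] [Fintype E]
    (G : Multigraph V E) (hG : G.EdgeConnected 3) (hcubic : G.Cubic)
    (C : Set E) (hC : G.IsCycle C) (hCper : G.Peripheral C) :
    ∃ B : Set E, C ⊆ B ∧ G.Peripheral B ∧ G.IsBase 2 B := by
  obtain ⟨X, hX⟩ := (Set.toFinite {X | ∃ B, C ⊆ B ∧ G.IsPartialBase B X}).exists_maximal
    ⟨_, C, subset_rfl, hC.isPartialBase hCper hcubic.subcubic⟩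
  obtain ⟨B, hCB, hBX⟩ := hX.prop
  have huniv : X = Set.univ := by
    by_contra hne
    obtain ⟨B', X', hBB', hXX', hBX'⟩ := hBX.exists_ssubset hG hcubic.subcubic hne
    exact hXX'.not_subset (hX.le_of_ge ⟨B', hCB.trans hBB', hBX'⟩ hXX'.subset)
  subst huniv
  exact ⟨B, hCB, hBX.peripheral, hBX.isBase hcubic.subcubic⟩
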